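/- arXiv:2204.11791 — 4 statements merged into one kernel-verified Lean document; each statement's English description precedes it below -/
import Mathlib

section
/- Let C be a nondegenerate [n,k]_{q^m/q} code and let h, r be integers with 0 ≤ h < k and h ≤ r ≤ n − k + h − 1. Then d_{k−h}(C) ≥ n − r if and only if d_{r−h+1}(C^⊥) ≥ r + 2, where d_s denotes the s-th generalized rank weight. -/
open Module Submodule

noncomputable section

variable (Fq Fqm : Type) [Field Fq] [Field Fqm] [Algebra Fq Fqm]

/-- Rank weight of a vector in `Fqm^n`: the `Fq`-dimension of the span of its entries. -/
def rankWeight {n : ℕ} (v : Fin n → Fqm) : ℕ :=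
  finrank Fq (span Fq (Set.range v))

/-- Minimum rank distance of a code. -/
def minRankDist {n : ℕ} (C : Submodule Fqm (Fin n → Fqm)) : ℕ :=
  sInf {w : ℕ | ∃ v ∈ C, v ≠ 0 ∧ rankWeight Fq Fqm v = w}

/-- Dual code with respect to the standard bilinear form. -/
def dualCode {n : ℕ} (C : Submodule Fqm (Fin n → Fqm)) : Submodule Fqm (Fin n → Fqm) where
  carrier := {v | ∀ c ∈ C, ∑ i, c i * v i = 0}
  add_mem' := by
    intro a b ha hb c hc
    simp only [Set.mem_setOf_eq] at ha hb
    simp only [Pi.add_apply, mul_add, Finset.sum_add_distrib, ha c hc, hb c hc, add_zero]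
  zero_mem' := by
    intro c hc
    simp
  smul_mem' := by
    intro t a ha c hc
    simp only [Set.mem_setOf_eq] at ha
    have key : (∑ i, c i * (t • a) i) = t * ∑ i, c i * a i := by
      rw [Finset.mul_sum]
      refine Finset.sum_congr rfl fun i _ => ?_
      simp only [Pi.smul_apply, smul_eq_mul]
      ring
    simp only [Set.mem_setOf_eq, key, ha c hc, mul_zero]

/-- An `Fqm`-subspace of `Fqm^n` is Galois closed if it is stable under the componentwise
action of every element of `Gal(Fqm/Fq)`. -/
def GaloisClosed {n : ℕ} (A : Submodule Fqm (Fin n → Fqm)) : Prop :=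
  ∀ θ : Fqm ≃ₐ[Fq] Fqm, ∀ v ∈ A, (fun i => θ (v i)) ∈ A

/-- The `s`-th generalized rank weight of a code `C`. -/
def grw {n : ℕ} (C : Submodule Fqm (Fin n → Fqm)) (s : ℕ) : ℕ :=
  sInf {x : ℕ | ∃ A : Submodule Fqm (Fin n → Fqm),
    GaloisClosed Fq Fqm A ∧ s ≤ finrank Fqm ↥(A ⊓ C) ∧ finrank Fqm ↥A = x}

/-- `G` (given as the tuple of its rows) is a generator matrix for `C`. -/
def IsGenMatrix {n k : ℕ} (C : Submodule Fqm (Fin n → Fqm)) (G : Fin k → Fin n → Fqm) : Prop :=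
  C = span Fqm (Set.range G)

/-- A code is nondegenerate if the `Fq`-span of the columns of a generator matrix has
`Fq`-dimension `n`. -/
def IsNondegenerate {n : ℕ} (k : ℕ) (C : Submodule Fqm (Fin n → Fqm)) : Prop :=
  ∃ G : Fin k → Fin n → Fqm, IsGenMatrix Fqm C G ∧
    finrank Fq ↥(span Fq (Set.range fun j : Fin n => fun i : Fin k => G i j)) = n

/-- `U` is a system associated to the code `C`: `U` is the `Fq`-span of the columns of some
generator matrix of `C`. -/
def IsAssociatedSystem {n k : ℕ} (C : Submodule Fqm (Fin n → Fqm))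
    (U : Submodule Fq (Fin k → Fqm)) : Prop :=
  ∃ G : Fin k → Fin n → Fqm, IsGenMatrix Fqm C G ∧
    U = span Fq (Set.range fun j : Fin n => fun i : Fin k => G i j)

/-- `U` is an `[n,k]` system: an `n`-dimensional `Fq`-subspace of `Fqm^k` whose
`Fqm`-span is everything. -/
def IsSystem {k : ℕ} (n : ℕ) (U : Submodule Fq (Fin k → Fqm)) : Prop :=
  finrank Fq ↥U = n ∧ span Fqm (U : Set (Fin k → Fqm)) = ⊤

/-- `U` is `(h,r)`-evasive: every `h`-dimensional `Fqm`-subspace meets `U` in `Fq`-dimension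
at most `r`. -/
def IsEvasive {k : ℕ} (U : Submodule Fq (Fin k → Fqm)) (h r : ℕ) : Prop :=
  ∀ W : Submodule Fqm (Fin k → Fqm), finrank Fqm ↥W = h →
    finrank Fq ↥(U ⊓ W.restrictScalars Fq) ≤ r

/-- A `k`-dimensional code `C ⊆ Fqm^n` is near MRD if `d₁(C) = n-k` and `dₛ(C) = n-k+s`
for all `2 ≤ s ≤ k`. -/
def IsNearMRD {n : ℕ} (k : ℕ) (C : Submodule Fqm (Fin n → Fqm)) : Prop :=
  grw Fq Fqm C 1 = n - k ∧ ∀ s : ℕ, 2 ≤ s → s ≤ k → grw Fq Fqm C s = n - k + s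

/-!
The proof rests on `dim (A^⊥ ∩ C^⊥) = n - dim A - dim C + dim (A ∩ C)`, and on the fact that
`A ↦ A^⊥` permutes the Galois closed subspaces. Since a Galois closed subspace can be enlarged by
standard basis vectors to a Galois closed subspace of any larger dimension, `d_s(C) > a` only needs
to be tested on Galois closed subspaces of dimension exactly `a`; passing to orthogonal complements
turns this into a test of `C^⊥` on the Galois closed subspaces of dimension `n - a`.
-/

section

variable {Fq Fqm} {n : ℕ}

theorem dualCode_eq_comap_dualAnnihilator (C : Submodule Fqm (Fin n → Fqm)) :
    dualCode Fqm C = C.dualAnnihilator.comap (dotProductEquiv Fqm (Fin n)).toLinearMap := by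
  ext v
  simp only [mem_comap, mem_dualAnnihilator, LinearEquiv.coe_coe, dotProductEquiv_apply_apply,
    dotProduct_comm v]
  rfl

theorem finrank_add_finrank_dualCode (C : Submodule Fqm (Fin n → Fqm)) :
    finrank Fqm C + finrank Fqm (dualCode Fqm C) = n := by
  rw [dualCode_eq_comap_dualAnnihilator, comap_equiv_eq_map_symm, LinearEquiv.finrank_map_eq,
    Subspace.finrank_add_finrank_dualAnnihilator_eq, finrank_fin_fun]

theorem dualCode_dualCode (C : Submodule Fqm (Fin n → Fqm)) :
    dualCode Fqm (dualCode Fqm C) = C := by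
  have le_bidual : C ≤ dualCode Fqm (dualCode Fqm C) := fun c hc v hv => by
    simpa only [mul_comm] using hv c hc
  have finrank_C := finrank_add_finrank_dualCode C
  have finrank_dual := finrank_add_finrank_dualCode (dualCode Fqm C)
  exact (eq_of_le_of_finrank_eq le_bidual (by omega)).symm

theorem dualCode_sup (A C : Submodule Fqm (Fin n → Fqm)) :
    dualCode Fqm (A ⊔ C) = dualCode Fqm A ⊓ dualCode Fqm C := by
  simp only [dualCode_eq_comap_dualAnnihilator, dualAnnihilator_sup_eq, comap_inf]

theorem finrank_dualCode_inf_dualCode (A C : Submodule Fqm (Fin n → Fqm)) :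
    finrank Fqm ↥(dualCode Fqm A ⊓ dualCode Fqm C) + finrank Fqm A + finrank Fqm C =
      n + finrank Fqm ↥(A ⊓ C) := by
  rw [← dualCode_sup, add_assoc, ← finrank_sup_add_finrank_inf_eq, ← add_assoc,
    add_comm (finrank Fqm (dualCode Fqm _)), finrank_add_finrank_dualCode]

theorem galoisClosed_top : GaloisClosed Fq Fqm (⊤ : Submodule Fqm (Fin n → Fqm)) :=
  fun _ _ _ => mem_top

theorem galoisClosed_dualCode {A : Submodule Fqm (Fin n → Fqm)} (hA : GaloisClosed Fq Fqm A) :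
    GaloisClosed Fq Fqm (dualCode Fqm A) := fun θ v hv c hc => by
  simpa using congrArg θ (hv _ (hA θ.symm c hc))

theorem galoisClosed_sup {A B : Submodule Fqm (Fin n → Fqm)} (hA : GaloisClosed Fq Fqm A)
    (hB : GaloisClosed Fq Fqm B) : GaloisClosed Fq Fqm (A ⊔ B) := by
  intro θ v hv
  obtain ⟨a, ha, b, hb, rfl⟩ := mem_sup.1 hv
  exact mem_sup.2 ⟨_, hA θ a ha, _, hB θ b hb, funext fun i => (map_add θ (a i) (b i)).symm⟩

theorem galoisClosed_span_single (i : Fin n) :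
    GaloisClosed Fq Fqm (span Fqm {(Pi.single i 1 : Fin n → Fqm)}) := by
  intro θ v hv
  obtain ⟨t, rfl⟩ := mem_span_singleton.1 hv
  refine mem_span_singleton.2 ⟨θ t, funext fun j => ?_⟩
  obtain rfl | hj := eq_or_ne j i <;> simp [*]

theorem exists_single_notMem {A : Submodule Fqm (Fin n → Fqm)} (hA : A ≠ ⊤) :
    ∃ i, (Pi.single i 1 : Fin n → Fqm) ∉ A := by
  contrapose! hA
  rw [eq_top_iff, ← (Pi.basisFun Fqm (Fin n)).span_eq, span_le]
  rintro _ ⟨i, rfl⟩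
  simpa only [Pi.basisFun_apply, SetLike.mem_coe] using hA i

theorem exists_galoisClosed_ge_finrank_eq {A : Submodule Fqm (Fin n → Fqm)}
    (hA : GaloisClosed Fq Fqm A) {x : ℕ} (hAx : finrank Fqm A ≤ x) (hxn : x ≤ n) :
    ∃ B, A ≤ B ∧ GaloisClosed Fq Fqm B ∧ finrank Fqm B = x := by
  induction x, hAx using Nat.le_induction with
  | base => exact ⟨A, le_rfl, hA, rfl⟩
  | succ x _ ih =>
    obtain ⟨B, hAB, hB, hBx⟩ := ih (Nat.le_of_succ_le hxn)
    have B_ne_top : B ≠ ⊤ := by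
      rintro rfl
      rw [finrank_top, finrank_fin_fun] at hBx
      omega
    obtain ⟨i, hi⟩ := exists_single_notMem B_ne_top
    exact ⟨B ⊔ span Fqm {Pi.single i 1}, hAB.trans le_sup_left,
      galoisClosed_sup hB (galoisClosed_span_single i), by rw [finrank_sup_span_singleton hi, hBx]⟩

theorem finrank_inf_lt_of_finrank_lt_grw {A C : Submodule Fqm (Fin n → Fqm)} {s : ℕ}
    (hA : GaloisClosed Fq Fqm A) (h : finrank Fqm A < grw Fq Fqm C s) :
    finrank Fqm ↥(A ⊓ C) < s := by
  contrapose! h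
  exact Nat.sInf_le ⟨A, hA, h, rfl⟩

theorem exists_galoisClosed_finrank_eq_grw {C : Submodule Fqm (Fin n → Fqm)} {s : ℕ}
    (hs : s ≤ finrank Fqm C) :
    ∃ A, GaloisClosed Fq Fqm A ∧ s ≤ finrank Fqm ↥(A ⊓ C) ∧ finrank Fqm A = grw Fq Fqm C s :=
  Nat.sInf_mem (s := {x | ∃ A, GaloisClosed Fq Fqm A ∧ s ≤ finrank Fqm ↥(A ⊓ C) ∧
    finrank Fqm A = x}) ⟨_, ⊤, galoisClosed_top, by rwa [top_inf_eq], rfl⟩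

theorem lt_grw_of_forall_finrank_inf_lt {C : Submodule Fqm (Fin n → Fqm)} {s x : ℕ}
    (hs : s ≤ finrank Fqm C) (hx : x ≤ n)
    (h : ∀ A, GaloisClosed Fq Fqm A → finrank Fqm A = x → finrank Fqm ↥(A ⊓ C) < s) :
    x < grw Fq Fqm C s := by
  obtain ⟨A, hA, hsA, hA_grw⟩ := exists_galoisClosed_finrank_eq_grw (Fq := Fq) hs
  rw [← hA_grw]
  by_contra! hAx
  obtain ⟨B, hAB, hB, hBx⟩ := exists_galoisClosed_ge_finrank_eq hA hAx hx
  have s_le : s ≤ finrank Fqm ↥(B ⊓ C) := hsA.trans (finrank_mono (inf_le_inf_right C hAB))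
  exact (h B hB hBx).not_ge s_le

theorem lt_grw_dualCode_of_lt_grw {C : Submodule Fqm (Fin n → Fqm)} {a b s t : ℕ}
    (hab : a + b = n) (hst : s + b = finrank Fqm C + t)
    (ht : t ≤ finrank Fqm (dualCode Fqm C)) (h : a < grw Fq Fqm C s) :
    b < grw Fq Fqm (dualCode Fqm C) t := by
  refine lt_grw_of_forall_finrank_inf_lt ht (by omega) fun B hB hBb => ?_
  have finrank_dual := finrank_add_finrank_dualCode B
  have inf_lt : finrank Fqm ↥(dualCode Fqm B ⊓ C) < s :=
    finrank_inf_lt_of_finrank_lt_grw (galoisClosed_dualCode hB) (by omega)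
  have finrank_inf := finrank_dualCode_inf_dualCode (dualCode Fqm B) C
  rw [dualCode_dualCode] at finrank_inf
  omega

theorem stmt1_general {C : Submodule Fqm (Fin n → Fqm)} {a b s t : ℕ}
    (hab : a + b = n) (hst : s + b = finrank Fqm C + t)
    (hs : s ≤ finrank Fqm C) (ht : t ≤ finrank Fqm (dualCode Fqm C)) :
    a < grw Fq Fqm C s ↔ b < grw Fq Fqm (dualCode Fqm C) t := by
  refine ⟨lt_grw_dualCode_of_lt_grw hab hst ht, fun h => ?_⟩
  have finrank_dual := finrank_add_finrank_dualCode C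
  rw [← dualCode_dualCode C] at hs ⊢
  exact lt_grw_dualCode_of_lt_grw (by omega) (by omega) hs h

end

/-- `d_{k-h}(C) ≥ n - r` iff `d_{r-h+1}(C^⊥) ≥ r + 2`. -/
theorem stmt1 [Fintype Fq] (n k h r : ℕ) (hk1 : 1 ≤ k) (hkn : k ≤ n)
    (hhk : h < k) (hhr : h ≤ r) (hrub : r + k + 1 ≤ n + h)
    (C : Submodule Fqm (Fin n → Fqm)) (hdim : finrank Fqm ↥C = k)
    (hnd : IsNondegenerate Fq Fqm k C) :
    n - r ≤ grw Fq Fqm C (k - h) ↔ r + 2 ≤ grw Fq Fqm (dualCode Fqm C) (r - h + 1) := by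
  have finrank_dual := finrank_add_finrank_dualCode C
  have duality := stmt1_general (Fq := Fq) (C := C) (a := n - (r + 1)) (b := r + 1) (s := k - h)
    (t := r - h + 1) (by omega) (by omega) (by omega) (by omega)
  omega
end
end

section
/- Suppose 1 ≤ h < k, h+1 divides km, and n = km/(h+1). Let U be an [n,k]_{q^m/q} system and let C be a nondegenerate [n,k]_{q^m/q} code associated to U (i.e., U is the 𝔽_q-span of the columns of a generator matrix of C). Then U is h-scattered (hence maximum h-scattered) if and only if C is an MRD code. -/
open Module Submodule

noncomputable section

variable (Fq Fqm : Type) [Field Fq] [Field Fqm] [Algebra Fq Fqm]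

/-!
Write `K ⊆ L` for the two fields. A linear form `f` on `L^k`, evaluated at the columns of the
generator matrix, runs through the codewords of `C`, and the weight of the resulting codeword is
`dim_K f(U)`. For `K`-independent `b₁, …, bᵣ ∈ L` consider the map
`Φ_b : U^r → L^k, u ↦ ∑ bᵢ uᵢ`.

* `U` is `h`-scattered iff every `h + 1` vectors of `U` independent over `K` stay independent over
  `L`, i.e. iff the multiplication `L ⊗ U → L^k` kills no nonzero tensor of rank at most `h + 1`.
  As this condition is symmetric in the two factors, it says that every `Φ_b` with `r = h + 1` is
  injective.
* Fix a nonzero `K`-linear form `ℓ` on `L`. Every `K`-linear form on `L^k` is `ℓ ∘ f` for some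
  `L`-linear `f`, and `ℓ ∘ f` vanishes on the range of `Φ_b` iff `f(U)` is orthogonal to all `bᵢ`
  for the form `ℓ (x y)`. Hence all `Φ_b` are surjective iff all weights exceed `m - r`.

If `n (h + 1) = k m` then the `Φ_b` with `r = h + 1` are maps between spaces of the same dimension,
so the two conditions coincide, while for `r = h` no `Φ_b` is surjective, which gives `d ≤ m - h`.
-/

section Subspaces

variable {K V : Type*} [Field K] [AddCommGroup V] [Module K V] [FiniteDimensional K V]

lemma exists_ge_finrank_eq {A : Submodule K V} {r : ℕ} (hA : finrank K A ≤ r)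
    (hr : r ≤ finrank K V) : ∃ X : Submodule K V, A ≤ X ∧ finrank K X = r := by
  obtain ⟨B, hAB⟩ := A.exists_isCompl
  have hB : finrank K A + finrank K B = finrank K V := finrank_add_eq_of_isCompl hAB
  obtain ⟨x, hx⟩ := exists_linearIndependent_of_le_finrank (R := K) (M := B)
    (n := r - finrank K A) (by omega)
  let S : Submodule K V := (span K (Set.range x)).map B.subtype
  have hS : finrank K S = r - finrank K A := by
    rw [finrank_map_subtype_eq, finrank_span_eq_card hx, Fintype.card_fin]
  have hAS : A ⊓ S = ⊥ := (hAB.disjoint.mono_right (map_subtype_le B _)).eq_bot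
  have hsum := finrank_sup_add_finrank_inf_eq A S
  rw [hAS, finrank_bot, hS] at hsum
  exact ⟨A ⊔ S, le_sup_left, by omega⟩

lemma exists_linearIndependent_forall_mem_span {r : ℕ} (hr : r ≤ finrank K V) (u : Fin r → V) :
    ∃ x : Fin r → V, LinearIndependent K x ∧ ∀ i, u i ∈ span K (Set.range x) := by
  obtain ⟨X, huX, hX⟩ := exists_ge_finrank_eq
    ((finrank_range_le_card (R := K) u).trans_eq (Fintype.card_fin r)) hr
  let x : Basis (Fin r) K X := finBasisOfFinrankEq K X hX
  have hx : span K (Set.range (X.subtype ∘ x)) = X := by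
    rw [Set.range_comp, ← map_span, x.span_eq, map_subtype_top]
  refine ⟨X.subtype ∘ x, x.linearIndependent.map' X.subtype X.ker_subtype, fun i => ?_⟩
  rw [hx]
  exact huX (subset_span ⟨i, rfl⟩)

lemma exists_linearIndependent_le_orthogonal_span {B : LinearMap.BilinForm K V}
    (hB : B.Nondegenerate) (hB₀ : B.IsRefl) {S : Submodule K V} {r : ℕ}
    (hr : finrank K S + r ≤ finrank K V) :
    ∃ b : Fin r → V, LinearIndependent K b ∧ S ≤ B.orthogonal (span K (Set.range b)) := by
  have hperp : r ≤ finrank K (B.orthogonal S) := by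
    rw [LinearMap.BilinForm.finrank_orthogonal hB]
    omega
  obtain ⟨b, hb⟩ := exists_linearIndependent_of_le_finrank hperp
  have hspan : span K (Set.range fun i => (b i : V)) ≤ B.orthogonal S := by
    rw [span_le]
    rintro _ ⟨i, rfl⟩
    exact (b i).2
  exact ⟨fun i => b i, hb.map' (Submodule.subtype _) (ker_subtype _),
    (LinearMap.BilinForm.le_orthogonal_orthogonal hB₀).trans
      (LinearMap.BilinForm.orthogonal_le hspan)⟩

end Subspaces

section BilinearMaps

variable {K M N P : Type*} [Field K] [AddCommGroup M] [Module K M] [AddCommGroup N] [Module K N]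
  [AddCommGroup P] [Module K P]

/-- The map `u ↦ ∑ i, β (b i) (u i)` attached to a bilinear map `β` and a family `b`. For
independent `b` it is the linearization of `β` restricted to `⟨b⟩ ⊗ N`, with `⟨b⟩ ⊗ N`
written as `N ^ r`. -/
def sumAlong (β : M →ₗ[K] N →ₗ[K] P) {r : ℕ} (b : Fin r → M) : (Fin r → N) →ₗ[K] P :=
  LinearMap.lsum K (fun _ => N) K fun i => β (b i)

lemma sumAlong_apply (β : M →ₗ[K] N →ₗ[K] P) {r : ℕ} (b : Fin r → M) (u : Fin r → N) :
    sumAlong β b u = ∑ i, β (b i) (u i) := by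
  simp [sumAlong]

/-- For `r ≤ dim M`: the linearization `M ⊗ N → P` of `β` kills no nonzero tensor of rank at most
`r`. The case `r = 1` is the usual notion of a nonsingular bilinear map; for `r > dim M` the
condition is vacuous. -/
def IsNonsingularAtRank (β : M →ₗ[K] N →ₗ[K] P) (r : ℕ) : Prop :=
  ∀ b : Fin r → M, LinearIndependent K b → Function.Injective (sumAlong β b)

variable {β : M →ₗ[K] N →ₗ[K] P} {r : ℕ}

lemma IsNonsingularAtRank.flip [FiniteDimensional K M] (hβ : IsNonsingularAtRank β r)
    (hr : r ≤ finrank K M) : IsNonsingularAtRank β.flip r := by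
  intro x hx
  rw [injective_iff_map_eq_zero]
  intro c hc
  obtain ⟨b, hb, hcb⟩ := exists_linearIndependent_forall_mem_span hr c
  choose a ha using fun i => mem_span_range_iff_exists_fun K |>.1 (hcb i)
  have hregroup : sumAlong β b (fun s => ∑ t, a t s • x t) = sumAlong β.flip x c := by
    simp only [sumAlong_apply, LinearMap.flip_apply, ← ha, map_sum, map_smul]
    exact Finset.sum_comm
  have hax : (fun s => ∑ t, a t s • x t) = 0 :=
    (injective_iff_map_eq_zero _).1 (hβ b hb) _ (hregroup.trans hc)
  have ha0 : ∀ t s, a t s = 0 := fun t s =>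
    Fintype.linearIndependent_iff.1 hx (fun t => a t s) (congrFun hax s) t
  ext t
  simp [← ha, ha0]

lemma isNonsingularAtRank_flip_iff [FiniteDimensional K M] [FiniteDimensional K N]
    (hM : r ≤ finrank K M) (hN : r ≤ finrank K N) :
    IsNonsingularAtRank β.flip r ↔ IsNonsingularAtRank β r :=
  ⟨fun hβ => hβ.flip hN, fun hβ => hβ.flip hM⟩

lemma isNonsingularAtRank_iff_forall_surjective [FiniteDimensional K N] [FiniteDimensional K P]
    (hr : r * finrank K N = finrank K P) :
    IsNonsingularAtRank β r ↔
      ∀ b : Fin r → M, LinearIndependent K b → Function.Surjective (sumAlong β b) :=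
  have hdim : finrank K (Fin r → N) = finrank K P := by simpa [finrank_pi_fintype] using hr
  forall₂_congr fun _ _ => LinearMap.injective_iff_surjective_of_finrank_eq_finrank hdim

end BilinearMaps

section FieldExtension

variable {K L V : Type*} [Field K] [Field L] [Algebra K L] [AddCommGroup V] [Module K V]
  [Module L V] [IsScalarTower K L V]

/-- The bilinear form `(x, y) ↦ ℓ (x y)` on `L`. It replaces the trace form, which is
zero when `L / K` is inseparable. -/
def mulForm (ℓ : Dual K L) : LinearMap.BilinForm K L :=
  (LinearMap.mul K L).compr₂ ℓ

lemma mulForm_apply (ℓ : Dual K L) (x y : L) : mulForm ℓ x y = ℓ (x * y) := rfl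

lemma mulForm_isRefl (ℓ : Dual K L) : (mulForm ℓ).IsRefl := fun x y hxy => by
  rwa [mulForm_apply, mul_comm]

lemma mulForm_nondegenerate {ℓ : Dual K L} (hℓ : ℓ ≠ 0) : (mulForm ℓ).Nondegenerate := by
  have hleft : ∀ x, (∀ y, ℓ (x * y) = 0) → x = 0 := by
    intro x hx
    by_contra hx0
    refine hℓ (LinearMap.ext fun z => ?_)
    simpa [hx0] using hx (x⁻¹ * z)
  exact ⟨hleft, fun y hy => hleft y fun x => mulForm_isRefl ℓ x y (hy x)⟩

lemma eq_zero_of_comp_restrictScalars_eq_zero {ℓ : Dual K L} (hℓ : ℓ ≠ 0) {f : Dual L V}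
    (hf : ℓ ∘ₗ f.restrictScalars K = 0) : f = 0 := by
  ext v
  refine (mulForm_nondegenerate hℓ).2 (f v) fun x => ?_
  simpa [mulForm_apply] using LinearMap.congr_fun hf (x • v)

lemma exists_comp_restrictScalars_eq [FiniteDimensional K L] [FiniteDimensional L V]
    {ℓ : Dual K L} (hℓ : ℓ ≠ 0) (φ : Dual K V) :
    ∃ f : Dual L V, ℓ ∘ₗ f.restrictScalars K = φ := by
  have : FiniteDimensional K V := FiniteDimensional.trans K L V
  let T : Dual L V →ₗ[K] Dual K V := ℓ.compRight K ∘ₗ LinearMap.restrictScalarsₗ K L V L K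
  have hT : Function.Injective T :=
    (injective_iff_map_eq_zero T).2 fun f => eq_zero_of_comp_restrictScalars_eq_zero hℓ
  have hdim : finrank K (Dual L V) = finrank K (Dual K V) := by
    rw [Subspace.dual_finrank_eq, ← finrank_mul_finrank K L (Dual L V), Subspace.dual_finrank_eq,
      finrank_mul_finrank]
  exact (LinearMap.injective_iff_surjective_of_finrank_eq_finrank hdim).1 hT φ

lemma map_restrictScalars_ne_bot {U : Submodule K V} (hU : span L (U : Set V) = ⊤) {f : Dual L V}
    (hf : f ≠ 0) : U.map (f.restrictScalars K) ≠ ⊥ := by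
  intro hmap
  refine hf (LinearMap.ker_eq_top.1 (top_le_iff.1 ?_))
  rw [← hU, span_le]
  exact fun u hu => map_le_iff_le_comap.1 hmap.le hu

/-- Scalar multiplication `L × U → V` as a `K`-bilinear map. -/
def smulOn (L : Type*) [Field L] [Algebra K L] [Module L V] [IsScalarTower K L V]
    (U : Submodule K V) : L →ₗ[K] U →ₗ[K] V :=
  (Algebra.lsmul K K V).toLinearMap.domRestrict₂ U

lemma smulOn_apply (U : Submodule K V) (x : L) (u : U) : smulOn L U x u = x • (u : V) := rfl

variable {U : Submodule K V} {r : ℕ}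

lemma isNonsingularAtRank_smulOn_flip_iff :
    IsNonsingularAtRank (smulOn L U).flip r ↔
      ∀ x : Fin r → U, LinearIndependent K x → LinearIndependent L fun i => (x i : V) := by
  refine forall₂_congr fun x _ => ?_
  have hcoe : ⇑(sumAlong (smulOn L U).flip x) =
      Fintype.linearCombination L (fun i => (x i : V)) := by
    ext c
    simp [sumAlong_apply, smulOn_apply, Fintype.linearCombination_apply]
  rw [linearIndependent_iff_injective_fintypeLinearCombination, hcoe]

lemma range_sumAlong_smulOn_le_ker_iff {ℓ : Dual K L} {f : Dual L V} {b : Fin r → L} :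
    LinearMap.range (sumAlong (smulOn L U) b) ≤ LinearMap.ker (ℓ ∘ₗ f.restrictScalars K) ↔
      U.map (f.restrictScalars K) ≤ (mulForm ℓ).orthogonal (span K (Set.range b)) := by
  constructor
  · rintro hker _ ⟨u, hu, rfl⟩
    have hb : span K (Set.range b) ≤ LinearMap.ker ((mulForm ℓ).flip (f u)) := by
      rw [span_le]
      rintro _ ⟨i, rfl⟩
      have hsingle : sumAlong (smulOn L U) b (Pi.single i ⟨u, hu⟩) = b i • u :=
        LinearMap.lsum_piSingle ..
      simpa [mulForm_apply] using hker ⟨_, hsingle⟩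
    exact fun x hx => hb hx
  · rintro horth _ ⟨u, rfl⟩
    have hzero : ∀ i, ℓ (b i * f (u i)) = 0 := fun i =>
      horth (mem_map_of_mem (u i).2) (b i) (subset_span ⟨i, rfl⟩)
    simp [sumAlong_apply, smulOn_apply, hzero]

lemma forall_surjective_sumAlong_smulOn_iff [FiniteDimensional K L] [FiniteDimensional L V] :
    (∀ b : Fin r → L, LinearIndependent K b → Function.Surjective (sumAlong (smulOn L U) b)) ↔
      ∀ f : Dual L V, f ≠ 0 → finrank K L < finrank K (U.map (f.restrictScalars K)) + r := by
  obtain ⟨ℓ, hℓ⟩ := exists_ne (0 : Dual K L)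
  constructor
  · intro hsurj f hf
    by_contra! hle
    obtain ⟨b, hb, hbf⟩ := exists_linearIndependent_le_orthogonal_span
      (mulForm_nondegenerate hℓ) (mulForm_isRefl ℓ) hle
    have hker := range_sumAlong_smulOn_le_ker_iff.2 hbf
    rw [LinearMap.range_eq_top.2 (hsurj b hb), top_le_iff, LinearMap.ker_eq_top] at hker
    exact hf (eq_zero_of_comp_restrictScalars_eq_zero hℓ hker)
  · intro hweight b hb
    rw [← LinearMap.range_eq_top]
    by_contra hrange
    obtain ⟨φ, hφ, hker⟩ := exists_le_ker_of_lt_top _ (lt_top_iff_ne_top.2 hrange)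
    obtain ⟨f, rfl⟩ := exists_comp_restrictScalars_eq hℓ φ
    have hf : f ≠ 0 := by
      rintro rfl
      exact hφ (LinearMap.comp_zero ℓ)
    have hle := Submodule.finrank_mono (range_sumAlong_smulOn_le_ker_iff.1 hker)
    have hbcard := hb.fintype_card_le_finrank
    rw [LinearMap.BilinForm.finrank_orthogonal (mulForm_nondegenerate hℓ),
      finrank_span_eq_card hb] at hle
    rw [Fintype.card_fin] at hle hbcard
    have := hweight f hf
    omega

end FieldExtension

section Systems

variable {Fq Fqm : Type} [Field Fq] [Field Fqm] [Algebra Fq Fqm] {n k : ℕ}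
  {C : Submodule Fqm (Fin n → Fqm)} {U : Submodule Fq (Fin k → Fqm)}

lemma isEvasive_iff_forall_lt_finrank_span [FiniteDimensional Fq Fqm] {h r : ℕ} (hk : h ≤ k) :
    IsEvasive Fq Fqm U h r ↔ ∀ x : Fin (r + 1) → U, LinearIndependent Fq x →
      h < finrank Fqm (span Fqm (Set.range fun i => (x i : Fin k → Fqm))) := by
  constructor
  · intro hU x hx
    by_contra! hle
    obtain ⟨W, hxW, hW⟩ := exists_ge_finrank_eq hle (by simpa using hk)
    let y : Fin (r + 1) → ↥(U ⊓ W.restrictScalars Fq) := fun i =>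
      ⟨x i, (x i).2, hxW (subset_span ⟨i, rfl⟩)⟩
    have hy : LinearIndependent Fq y :=
      (hx.map' U.subtype U.ker_subtype).of_comp (Submodule.subtype _)
    have hcard := hy.fintype_card_le_finrank
    rw [Fintype.card_fin] at hcard
    have := hU W hW
    omega
  · intro hU W hW
    by_contra! hlt
    obtain ⟨y, hy⟩ := exists_linearIndependent_of_le_finrank hlt
    let x : Fin (r + 1) → U := fun i => ⟨y i, (y i).2.1⟩
    have hx : LinearIndependent Fq x :=
      (hy.map' (Submodule.subtype _) (ker_subtype _)).of_comp U.subtype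
    have hxW : span Fqm (Set.range fun i => (x i : Fin k → Fqm)) ≤ W := by
      rw [span_le]
      rintro _ ⟨i, rfl⟩
      exact (y i).2.2
    exact (hU x hx).not_ge ((Submodule.finrank_mono hxW).trans_eq hW)

lemma isEvasive_self_iff_isNonsingularAtRank [FiniteDimensional Fq Fqm] {h : ℕ} (hk : h ≤ k) :
    IsEvasive Fq Fqm U h h ↔ IsNonsingularAtRank (smulOn Fqm U).flip (h + 1) := by
  rw [isEvasive_iff_forall_lt_finrank_span hk, isNonsingularAtRank_smulOn_flip_iff]
  refine forall₂_congr fun x _ => ?_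
  rw [linearIndependent_iff_card_le_finrank_span, Fintype.card_fin]
  rfl

lemma mem_span_rows_iff {G : Fin k → Fin n → Fqm} {c : Fin n → Fqm} :
    c ∈ span Fqm (Set.range G) ↔
      ∃ f : Dual Fqm (Fin k → Fqm), (fun j => f fun i => G i j) = c := by
  rw [mem_span_range_iff_exists_fun, (dotProductEquiv Fqm (Fin k)).surjective.exists]
  refine exists_congr fun a => ?_
  have hcomb : ∑ i, a i • G i = fun j => dotProductEquiv Fqm (Fin k) a fun i => G i j := by
    ext j
    simp [dotProduct]
  rw [hcomb]

lemma rankWeight_comp_eq_finrank_map (f : Dual Fqm (Fin k → Fqm)) (g : Fin n → Fin k → Fqm) :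
    rankWeight Fq Fqm (fun j => f (g j)) =
      finrank Fq ((span Fq (Set.range g)).map (f.restrictScalars Fq)) := by
  rw [rankWeight, map_span, ← Set.range_comp]
  rfl

lemma IsAssociatedSystem.le_of_isSystem (hU : IsAssociatedSystem Fq Fqm C U)
    (hsys : IsSystem Fq Fqm n U) : k ≤ n := by
  obtain ⟨G, -, rfl⟩ := hU
  have hspan := hsys.2
  rw [span_span_of_tower] at hspan
  have hcard := finrank_range_le_card (R := Fqm) fun j i => G i j
  rw [Set.finrank, hspan] at hcard
  simpa using hcard

lemma minRankDist_eq_sInf_finrank_map (hsys : IsSystem Fq Fqm n U)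
    (hU : IsAssociatedSystem Fq Fqm C U) :
    minRankDist Fq Fqm C = sInf {w | ∃ f : Dual Fqm (Fin k → Fqm), f ≠ 0 ∧
      finrank Fq (U.map (f.restrictScalars Fq)) = w} := by
  obtain ⟨G, rfl, rfl⟩ := hU
  rw [minRankDist]
  congr 1
  ext w
  constructor
  · rintro ⟨_, hv, hv0, rfl⟩
    obtain ⟨f, rfl⟩ := mem_span_rows_iff.1 hv
    refine ⟨f, ?_, (rankWeight_comp_eq_finrank_map f _).symm⟩
    rintro rfl
    exact hv0 rfl
  · rintro ⟨f, hf, rfl⟩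
    refine ⟨_, mem_span_rows_iff.2 ⟨f, rfl⟩, fun hzero => ?_, rankWeight_comp_eq_finrank_map f _⟩
    refine map_restrictScalars_ne_bot hsys.2 hf ?_
    rw [map_span, span_eq_bot]
    rintro _ ⟨_, ⟨j, rfl⟩, rfl⟩
    exact congrFun hzero j

lemma le_minRankDist_iff (hk : 0 < k) (hsys : IsSystem Fq Fqm n U)
    (hU : IsAssociatedSystem Fq Fqm C U) {w : ℕ} :
    w ≤ minRankDist Fq Fqm C ↔
      ∀ f : Dual Fqm (Fin k → Fqm), f ≠ 0 → w ≤ finrank Fq (U.map (f.restrictScalars Fq)) := by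
  have : Nonempty (Fin k) := ⟨⟨0, hk⟩⟩
  obtain ⟨f₀, hf₀⟩ := exists_ne (0 : Dual Fqm (Fin k → Fqm))
  have hne : {w | ∃ f : Dual Fqm (Fin k → Fqm), f ≠ 0 ∧
      finrank Fq (U.map (f.restrictScalars Fq)) = w}.Nonempty := ⟨_, f₀, hf₀, rfl⟩
  rw [minRankDist_eq_sInf_finrank_map hsys hU, le_csInf_iff'' hne]
  exact ⟨fun hw f hf => hw _ ⟨f, hf, rfl⟩, fun hw _ ⟨f, hf, hfw⟩ => hfw ▸ hw f hf⟩

variable [FiniteDimensional Fq Fqm]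

lemma minRankDist_pos (hk : 0 < k) (hsys : IsSystem Fq Fqm n U)
    (hU : IsAssociatedSystem Fq Fqm C U) : 0 < minRankDist Fq Fqm C :=
  (le_minRankDist_iff hk hsys hU).2 fun _ hf =>
    one_le_finrank_iff.2 (map_restrictScalars_ne_bot hsys.2 hf)

lemma finrank_lt_minRankDist_add_iff (hk : 0 < k) (hsys : IsSystem Fq Fqm n U)
    (hU : IsAssociatedSystem Fq Fqm C U) {r : ℕ} :
    finrank Fq Fqm < minRankDist Fq Fqm C + r ↔ ∀ b : Fin r → Fqm, LinearIndependent Fq b →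
      Function.Surjective (sumAlong (smulOn Fqm U) b) := by
  rw [forall_surjective_sumAlong_smulOn_iff]
  simp only [← Nat.succ_le_iff, ← tsub_le_iff_right]
  exact le_minRankDist_iff hk hsys hU

lemma minRankDist_add_le_finrank (hk : 0 < k) (hsys : IsSystem Fq Fqm n U)
    (hU : IsAssociatedSystem Fq Fqm C U) {r : ℕ} (hr : n * r < k * finrank Fq Fqm) :
    minRankDist Fq Fqm C + r ≤ finrank Fq Fqm := by
  by_contra! hlt
  have hrm : r < finrank Fq Fqm := lt_of_mul_lt_mul_left
    (hr.trans_le (Nat.mul_le_mul_right _ (hU.le_of_isSystem hsys))) n.zero_le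
  obtain ⟨b, hb⟩ := exists_linearIndependent_of_le_finrank hrm.le
  have hle := LinearMap.finrank_le_finrank_of_surjective
    ((finrank_lt_minRankDist_add_iff hk hsys hU).1 hlt b hb)
  simp only [finrank_pi_fintype, Finset.sum_const, Finset.card_univ, Fintype.card_fin, hsys.1,
    smul_eq_mul] at hle
  rw [mul_comm r] at hle
  omega

lemma isEvasive_self_iff_finrank_le_minRankDist_add {h : ℕ} (hk : h < k)
    (hn : n * (h + 1) = k * finrank Fq Fqm) (hsys : IsSystem Fq Fqm n U)
    (hU : IsAssociatedSystem Fq Fqm C U) :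
    IsEvasive Fq Fqm U h h ↔ finrank Fq Fqm ≤ minRankDist Fq Fqm C + h := by
  have hkn : k ≤ n := hU.le_of_isSystem hsys
  have hhm : h < finrank Fq Fqm :=
    Nat.le_of_mul_le_mul_left (hn.trans_le (Nat.mul_le_mul_right _ hkn)) (by omega)
  have hdim : (h + 1) * finrank Fq U = finrank Fq (Fin k → Fqm) := by
    simp [hsys.1, finrank_pi_fintype, ← hn, mul_comm]
  rw [isEvasive_self_iff_isNonsingularAtRank hk.le,
    isNonsingularAtRank_flip_iff hhm (hsys.1 ▸ hk.trans_le hkn),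
    isNonsingularAtRank_iff_forall_surjective hdim,
    ← finrank_lt_minRankDist_add_iff (by omega) hsys hU, ← add_assoc, Nat.lt_succ_iff]

end Systems

lemma mul_eq_min_iff_le_add {n k m h d : ℕ} (hn : n * (h + 1) = k * m) (hn0 : 0 < n)
    (hmn : m ≤ n) (hd : 0 < d) (hdm : d + h ≤ m) :
    (k : ℤ) * m = min ((m : ℤ) * ((n : ℤ) - d + 1)) ((n : ℤ) * ((m : ℤ) - d + 1)) ↔
      m ≤ d + h := by
  have hmin : (n : ℤ) * ((m : ℤ) - d + 1) ≤ (m : ℤ) * ((n : ℤ) - d + 1) := by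
    have : (0 : ℤ) ≤ ((n : ℤ) - m) * ((d : ℤ) - 1) := mul_nonneg (by omega) (by omega)
    linarith
  have hkm : (k : ℤ) * m = n * (h + 1) := by exact_mod_cast hn.symm
  rw [min_eq_right hmin, hkm, mul_right_inj' (by omega)]
  omega

theorem stmt11_general (n k m h : ℕ) (hm : finrank Fq Fqm = m) (hhk : h < k)
    (hn : n * (h + 1) = k * m) (C : Submodule Fqm (Fin n → Fqm))
    (U : Submodule Fq (Fin k → Fqm)) (hsys : IsSystem Fq Fqm n U)
    (hU : IsAssociatedSystem Fq Fqm C U) :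
    IsEvasive Fq Fqm U h h ↔
      (k : ℤ) * m = min ((m : ℤ) * ((n : ℤ) - (minRankDist Fq Fqm C : ℤ) + 1))
        ((n : ℤ) * ((m : ℤ) - (minRankDist Fq Fqm C : ℤ) + 1)) := by
  subst hm
  have hkn : k ≤ n := hU.le_of_isSystem hsys
  have hk0 : 0 < k := by omega
  have hn0 : 0 < n := by omega
  have hm0 : 0 < finrank Fq Fqm :=
    Nat.pos_of_mul_pos_left (hn ▸ Nat.mul_pos hn0 h.succ_pos)
  have : FiniteDimensional Fq Fqm := FiniteDimensional.of_finrank_pos hm0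
  have hmn : finrank Fq Fqm ≤ n :=
    Nat.le_of_mul_le_mul_right
      ((Nat.mul_le_mul_left _ hhk).trans_eq ((mul_comm _ k).trans hn.symm)) h.succ_pos
  have hsingleton : minRankDist Fq Fqm C + h ≤ finrank Fq Fqm :=
    minRankDist_add_le_finrank hk0 hsys hU (hn ▸ Nat.mul_lt_mul_of_pos_left h.lt_succ_self hn0)
  rw [isEvasive_self_iff_finrank_le_minRankDist_add hhk hn hsys hU,
    mul_eq_min_iff_le_add hn hn0 hmn (minRankDist_pos hk0 hsys hU) hsingleton]

/-- with `h+1 ∣ km` and `n = km/(h+1)`, `U` is (maximum) `h`-scattered iff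
`C` is MRD, i.e. `km = min{m(n-d+1), n(m-d+1)}` where `d` is the minimum rank distance. -/
theorem stmt11 [Fintype Fq] (n k m h : ℕ) (hm : finrank Fq Fqm = m)
    (hh1 : 1 ≤ h) (hhk : h < k) (hdvd : (h + 1) ∣ k * m) (hn : n * (h + 1) = k * m)
    (C : Submodule Fqm (Fin n → Fqm)) (hdim : finrank Fqm ↥C = k)
    (hnd : IsNondegenerate Fq Fqm k C)
    (U : Submodule Fq (Fin k → Fqm)) (hsys : IsSystem Fq Fqm n U)
    (hU : IsAssociatedSystem Fq Fqm C U) :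
    IsEvasive Fq Fqm U h h ↔
      (k : ℤ) * m = min ((m : ℤ) * ((n : ℤ) - (minRankDist Fq Fqm C : ℤ) + 1))
        ((n : ℤ) * ((m : ℤ) - (minRankDist Fq Fqm C : ℤ) + 1)) :=
  stmt11_general Fq Fqm n k m h hm hhk hn C U hsys hU
end
end

section
/- Assume m ≥ k ≥ 2. Then the set U := {(α+λ, α^q, α^{q²}, …, α^{q^{k−1}}) : α ∈ 𝔽_{q^m}, λ ∈ 𝔽_q} ⊆ 𝔽_{q^m}^k is an [m+1,k]_{q^m/q} system (i.e., an 𝔽_q-subspace of 𝔽_q-dimension m+1 whose 𝔽_{q^m}-span is 𝔽_{q^m}^k), and U is (k−2)-scattered and (k−1,k)-evasive. -/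
open Module Submodule

noncomputable section

variable (Fq Fqm : Type) [Field Fq] [Field Fqm] [Algebra Fq Fqm]

/-!
Write `g α = (α, α^q, …, α^{q^{n-1}})`. A subspace `W` with `dim W = h < n` satisfies a linear
equation in the first `h + 1` coordinates only, so the `α` with `g α ∈ W` are roots of a nonzero
`q`-polynomial of degree at most `q^h`, and hence form an `𝔽_q`-space of dimension at most `h`.

The system is `U = g(𝔽_{q^m}) + 𝔽_q e₀`. Adding one vector raises intersection dimensions by at
most one, which gives `(k-1, k)`-evasiveness. For `(k-2)`-scatteredness, forget the coordinate `0`: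
the image of `U` lies in the image of `g` for `n = k - 1`, and the part of `U` that is killed is
`𝔽_q e₀`; both are scattered, so the dimensions of image and kernel add up to the bound.
-/

section LinearAlgebra

variable {K V V' : Type*} [Field K] [AddCommGroup V] [Module K V] [AddCommGroup V'] [Module K V']

theorem finrank_map_add_finrank_inf_ker (f : V →ₗ[K] V') (E : Submodule K V)
    [FiniteDimensional K E] :
    finrank K (E.map f) + finrank K ↥(E ⊓ LinearMap.ker f) = finrank K E := by
  rw [← LinearMap.finrank_range_add_finrank_ker (f.domRestrict E), LinearMap.range_domRestrict,
    LinearMap.ker_domRestrict, ← Submodule.finrank_map_subtype_eq E, Submodule.map_comap_subtype]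

theorem finrank_sup_inf_le (A B X : Submodule K V) [FiniteDimensional K A]
    [FiniteDimensional K B] :
    finrank K ↥((A ⊔ B) ⊓ X) ≤ finrank K ↥(A ⊓ X) + finrank K B := by
  have hsum := Submodule.finrank_sup_add_finrank_inf_eq A ((A ⊔ B) ⊓ X)
  have hsup : finrank K ↥(A ⊔ (A ⊔ B) ⊓ X) ≤ finrank K A + finrank K B :=
    (Submodule.finrank_mono (sup_le le_sup_left inf_le_left)).trans
      (Submodule.finrank_add_le_finrank_add_finrank A B)
  rw [← inf_assoc, inf_sup_self] at hsum
  omega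

theorem exists_ne_zero_forall_dotProduct_eq_zero {ι : Type*} [Fintype ι]
    {W : Submodule K (ι → K)} (hW : W ≠ ⊤) :
    ∃ c : ι → K, c ≠ 0 ∧ ∀ w ∈ W, c ⬝ᵥ w = 0 := by
  classical
  obtain ⟨f, hf, hWf⟩ := W.exists_le_ker_of_lt_top hW.lt_top
  obtain ⟨c, rfl⟩ := (dotProductEquiv K ι).surjective f
  exact ⟨c, by simpa using hf, fun w hw => hWf hw⟩

end LinearAlgebra

section RestrictScalars

variable {K L V V' : Type*} [Field K] [Field L] [Algebra K L]
  [AddCommGroup V] [Module K V] [Module L V] [IsScalarTower K L V]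
  [AddCommGroup V'] [Module K V'] [Module L V'] [IsScalarTower K L V']

theorem finrank_span_singleton_inf_restrictScalars_le (v : V) (W : Submodule L V)
    [FiniteDimensional L W] :
    finrank K ↥(K ∙ v ⊓ W.restrictScalars K) ≤ finrank L W := by
  by_cases hbot : K ∙ v ⊓ W.restrictScalars K = ⊥
  · rw [hbot, finrank_bot]
    exact Nat.zero_le _
  obtain ⟨w, ⟨-, hwW⟩, hw⟩ := Submodule.exists_mem_ne_zero_of_ne_bot hbot
  calc finrank K ↥(K ∙ v ⊓ W.restrictScalars K) ≤ finrank K (K ∙ v) :=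
        Submodule.finrank_mono inf_le_left
    _ ≤ 1 := by simpa using finrank_span_le_card (R := K) {v}
    _ ≤ finrank L W := Submodule.one_le_finrank_iff.mpr (W.ne_bot_iff.mpr ⟨w, hwW, hw⟩)

theorem finrank_inf_restrictScalars_le_of_map_of_ker (π : V →ₗ[L] V') (U : Submodule K V)
    [FiniteDimensional K U] (W : Submodule L V) [FiniteDimensional L W]
    (hmap : finrank K ↥(U.map (π.restrictScalars K) ⊓ (W.map π).restrictScalars K) ≤
      finrank L (W.map π))
    (hker : finrank K ↥(U ⊓ LinearMap.ker (π.restrictScalars K) ⊓ W.restrictScalars K) ≤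
      finrank L ↥(W ⊓ LinearMap.ker π)) :
    finrank K ↥(U ⊓ W.restrictScalars K) ≤ finrank L W := by
  have : FiniteDimensional K ↥(U ⊓ W.restrictScalars K) :=
    Submodule.finiteDimensional_of_le inf_le_left
  rw [← finrank_map_add_finrank_inf_ker π W,
    ← finrank_map_add_finrank_inf_ker (π.restrictScalars K), inf_right_comm]
  exact add_le_add ((Submodule.finrank_mono (Submodule.map_inf_le _)).trans hmap) hker

end RestrictScalars

section QPolynomial

open Polynomial

variable {L : Type*} [Field L] {n : ℕ}

/-- The `q`-polynomial `∑ i, c i * X ^ q ^ i` with coefficient vector `c`. -/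
def qPolynomial (q : ℕ) (c : Fin n → L) : L[X] :=
  ∑ i : Fin n, C (c i) * X ^ q ^ (i : ℕ)

theorem eval_qPolynomial (q : ℕ) (c : Fin n → L) (z : L) :
    (qPolynomial q c).eval z = c ⬝ᵥ fun i : Fin n => z ^ q ^ (i : ℕ) := by
  simp [qPolynomial, eval_finsetSum, dotProduct]

theorem coeff_qPolynomial {q : ℕ} (hq : 1 < q) (c : Fin n → L) (j : Fin n) :
    (qPolynomial q c).coeff (q ^ (j : ℕ)) = c j := by
  simp [qPolynomial, coeff_X_pow, (Nat.pow_right_injective hq).eq_iff, Fin.val_inj]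

theorem qPolynomial_ne_zero {q : ℕ} (hq : 1 < q) {c : Fin n → L} (hc : c ≠ 0) :
    qPolynomial q c ≠ 0 := by
  obtain ⟨j, hj⟩ := Function.ne_iff.mp hc
  intro hzero
  exact hj (by simpa [hzero] using (coeff_qPolynomial hq c j).symm)

theorem natDegree_qPolynomial_le {q : ℕ} (hq : 0 < q) (c : Fin (n + 1) → L) :
    (qPolynomial q c).natDegree ≤ q ^ n :=
  natDegree_sum_le_of_forall_le _ _ fun i _ =>
    (natDegree_C_mul_X_pow_le _ _).trans (Nat.pow_le_pow_right hq i.is_le)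

theorem finrank_le_of_forall_eval_qPolynomial_eq_zero {K : Type*} [Field K] [Fintype K]
    [Algebra K L] {c : Fin (n + 1) → L} (hc : c ≠ 0) {Z : Submodule K L}
    (hZ : ∀ z ∈ Z, (qPolynomial (Fintype.card K) c).eval z = 0) :
    finrank K Z ≤ n := by
  have hq : 1 < Fintype.card K := Fintype.one_lt_card
  set p := qPolynomial (Fintype.card K) c
  have hroots : (Z : Set L) ⊆ p.rootSet L := fun z hz =>
    mem_rootSet.mpr ⟨qPolynomial_ne_zero hq hc, by simpa using hZ z hz⟩
  have : Finite Z := (p.rootSet_finite L).subset hroots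
  refine (Nat.pow_le_pow_iff_right hq).mp ?_
  calc Fintype.card K ^ finrank K Z = (Z : Set L).ncard := by
        rw [← Nat.card_eq_fintype_card, ← Module.natCard_eq_pow_finrank]
        exact Nat.card_coe_set_eq (Z : Set L)
    _ ≤ (p.rootSet L).ncard := Set.ncard_le_ncard hroots (p.rootSet_finite L)
    _ ≤ p.natDegree := p.ncard_rootSet_le L
    _ ≤ Fintype.card K ^ n := natDegree_qPolynomial_le hq.le c

end QPolynomial

section Gabidulin

variable (K L : Type*) [Field K] [Fintype K] [Field L] [Algebra K L]

/-- The map `α ↦ (α, α^q, …, α^{q^{n-1}})`, with `q` the cardinality of `K`. Its range is the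
system associated to a Gabidulin code. -/
def gabidulinMap (n : ℕ) : L →ₗ[K] (Fin n → L) :=
  LinearMap.pi fun i => (FiniteField.frobeniusAlgHom K L ^ (i : ℕ)).toLinearMap

/-- The system `{(α + λ, α^q, …, α^{q^n}) : α ∈ L, λ ∈ K}`, that is, the range of the Gabidulin map
enlarged by the first standard basis vector. -/
def extendedGabidulinSystem (n : ℕ) : Submodule K (Fin (n + 1) → L) :=
  LinearMap.range (gabidulinMap K L (n + 1)) ⊔ K ∙ Pi.single 0 1

variable {K L} {n : ℕ}

theorem gabidulinMap_apply (α : L) :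
    gabidulinMap K L n α = fun i : Fin n => α ^ Fintype.card K ^ (i : ℕ) := by
  ext i
  simp [gabidulinMap, FiniteField.coe_frobeniusAlgHom, AlgHom.coe_pow, pow_iterate]

theorem gabidulinMap_injective (hn : 0 < n) : Function.Injective (gabidulinMap K L n) :=
  fun α β h => by simpa [gabidulinMap_apply] using congrFun h ⟨0, hn⟩

theorem funLeft_succ_gabidulinMap (α : L) :
    LinearMap.funLeft L L Fin.succ (gabidulinMap K L (n + 1) α) =
      gabidulinMap K L n (α ^ Fintype.card K) := by
  ext i
  simp [gabidulinMap_apply, LinearMap.funLeft_apply, ← pow_mul, pow_succ']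

theorem eq_zero_of_funLeft_succ_gabidulinMap_eq_zero (hn : 0 < n) {α : L}
    (h : LinearMap.funLeft L L Fin.succ (gabidulinMap K L (n + 1) α) = 0) : α = 0 := by
  rw [funLeft_succ_gabidulinMap, map_eq_zero_iff _ (gabidulinMap_injective hn)] at h
  exact pow_eq_zero_iff Fintype.card_ne_zero |>.mp h

theorem funLeft_succ_single_zero (a : L) :
    LinearMap.funLeft L L Fin.succ (Pi.single 0 a : Fin (n + 1) → L) = 0 := by
  ext i
  simp [LinearMap.funLeft_apply]

theorem finrank_comap_gabidulinMap_le {W : Submodule L (Fin n → L)} (hW : finrank L W < n) :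
    finrank K ((W.restrictScalars K).comap (gabidulinMap K L n)) ≤ finrank L W := by
  let firstCoords := LinearMap.funLeft L L (Fin.castLE hW)
  have hproper : W.map firstCoords ≠ ⊤ := fun htop => by
    have hle := Submodule.finrank_map_le firstCoords W
    rw [htop, finrank_top, finrank_fin_fun] at hle
    omega
  obtain ⟨c, hc, hcW⟩ := exists_ne_zero_forall_dotProduct_eq_zero hproper
  refine finrank_le_of_forall_eval_qPolynomial_eq_zero hc fun α hα => ?_
  rw [eval_qPolynomial]
  simpa [gabidulinMap_apply, firstCoords, Function.comp_def, LinearMap.funLeft]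
    using hcW _ (Submodule.mem_map_of_mem hα)

theorem finrank_range_gabidulinMap_inf_le {W : Submodule L (Fin n → L)}
    (hW : finrank L W < n) :
    finrank K ↥(LinearMap.range (gabidulinMap K L n) ⊓ W.restrictScalars K) ≤ finrank L W := by
  rw [← Submodule.map_comap_eq,
    ← (Submodule.equivMapOfInjective _ (gabidulinMap_injective (by omega)) _).finrank_eq]
  exact finrank_comap_gabidulinMap_le hW

theorem span_range_gabidulinMap_eq_top (hn : n ≤ finrank K L) :
    span L (LinearMap.range (gabidulinMap K L n) : Set (Fin n → L)) = ⊤ := by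
  by_contra hne
  set W := span L (LinearMap.range (gabidulinMap K L n) : Set (Fin n → L))
  have hlt : finrank L W < n := by simpa using Submodule.finrank_lt hne
  have hcomap : (W.restrictScalars K).comap (gabidulinMap K L n) = ⊤ :=
    Submodule.eq_top_iff'.mpr fun α => Submodule.subset_span ⟨α, rfl⟩
  have hle := finrank_comap_gabidulinMap_le (K := K) hlt
  rw [hcomap, finrank_top] at hle
  omega

theorem coe_extendedGabidulinSystem :
    (extendedGabidulinSystem K L n : Set (Fin (n + 1) → L)) =
      {v | ∃ (α : L) (l : K), v = fun i : Fin (n + 1) =>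
        if (i : ℕ) = 0 then α + algebraMap K L l else α ^ Fintype.card K ^ (i : ℕ)} := by
  have hsum (α : L) (l : K) : gabidulinMap K L (n + 1) α + l • (Pi.single 0 1 : Fin (n + 1) → L) =
      fun i : Fin (n + 1) =>
        if (i : ℕ) = 0 then α + algebraMap K L l else α ^ Fintype.card K ^ (i : ℕ) := by
    ext i
    cases i using Fin.cases <;> simp [gabidulinMap_apply, Algebra.smul_def]
  ext v
  simp [extendedGabidulinSystem, Submodule.mem_sup, Submodule.mem_span_singleton, hsum, eq_comm]

theorem disjoint_range_gabidulinMap_span_single (hn : 0 < n) :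
    Disjoint (LinearMap.range (gabidulinMap K L (n + 1))) (K ∙ Pi.single 0 1) := by
  rw [Submodule.disjoint_def]
  rintro _ ⟨α, rfl⟩ hα
  obtain ⟨l, hl⟩ := Submodule.mem_span_singleton.mp hα
  have hzero : α = 0 := eq_zero_of_funLeft_succ_gabidulinMap_eq_zero (K := K) hn <| by
    rw [← hl, ← Pi.single_smul, funLeft_succ_single_zero]
  rw [hzero, map_zero]

theorem finrank_extendedGabidulinSystem [FiniteDimensional K L] (hn : 0 < n) :
    finrank K (extendedGabidulinSystem K L n) = finrank K L + 1 := by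
  have hsum := Submodule.finrank_sup_add_finrank_inf_eq
    (LinearMap.range (gabidulinMap K L (n + 1))) (K ∙ Pi.single 0 1)
  rwa [(disjoint_range_gabidulinMap_span_single hn).eq_bot, finrank_bot, add_zero,
    LinearMap.finrank_range_of_inj (gabidulinMap_injective n.succ_pos),
    finrank_span_singleton (by simp)] at hsum

theorem span_extendedGabidulinSystem_eq_top (hn : n + 1 ≤ finrank K L) :
    span L (extendedGabidulinSystem K L n : Set (Fin (n + 1) → L)) = ⊤ :=
  top_unique <| (span_range_gabidulinMap_eq_top hn).ge.trans <|
    Submodule.span_mono (SetLike.coe_subset_coe.mpr le_sup_left)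

theorem map_funLeft_succ_extendedGabidulinSystem_le :
    (extendedGabidulinSystem K L n).map ((LinearMap.funLeft L L Fin.succ).restrictScalars K) ≤
      LinearMap.range (gabidulinMap K L n) := by
  rw [extendedGabidulinSystem, Submodule.map_le_iff_le_comap, sup_le_iff,
    Submodule.span_singleton_le_iff_mem]
  constructor
  · rintro _ ⟨α, rfl⟩
    exact ⟨α ^ Fintype.card K, (funLeft_succ_gabidulinMap α).symm⟩
  · exact ⟨0, by simp [funLeft_succ_single_zero]⟩

theorem extendedGabidulinSystem_inf_ker_funLeft_succ_le (hn : 0 < n) :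
    extendedGabidulinSystem K L n ⊓
      LinearMap.ker ((LinearMap.funLeft L L Fin.succ).restrictScalars K) ≤ K ∙ Pi.single 0 1 := by
  rintro v ⟨hv, hker⟩
  obtain ⟨_, ⟨α, rfl⟩, w, hw, rfl⟩ := Submodule.mem_sup.mp hv
  obtain ⟨l, rfl⟩ := Submodule.mem_span_singleton.mp hw
  have hzero : α = 0 := eq_zero_of_funLeft_succ_gabidulinMap_eq_zero (K := K) hn <| by
    simpa [← Pi.single_smul, funLeft_succ_single_zero] using hker
  simpa [hzero] using hw

variable [FiniteDimensional K L] {W : Submodule L (Fin (n + 1) → L)}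

theorem finrank_extendedGabidulinSystem_inf_le_add_one (hW : finrank L W < n + 1) :
    finrank K ↥(extendedGabidulinSystem K L n ⊓ W.restrictScalars K) ≤ finrank L W + 1 :=
  (finrank_sup_inf_le _ _ _).trans <|
    add_le_add (finrank_range_gabidulinMap_inf_le hW) (finrank_span_singleton (by simp)).le

theorem finrank_extendedGabidulinSystem_inf_le (hW : finrank L W < n) :
    finrank K ↥(extendedGabidulinSystem K L n ⊓ W.restrictScalars K) ≤ finrank L W := by
  let tail : (Fin (n + 1) → L) →ₗ[L] (Fin n → L) := LinearMap.funLeft L L Fin.succ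
  refine finrank_inf_restrictScalars_le_of_map_of_ker tail _ W ?_ ?_
  · exact (Submodule.finrank_mono
      (inf_le_inf_right _ map_funLeft_succ_extendedGabidulinSystem_le)).trans
      (finrank_range_gabidulinMap_inf_le ((Submodule.finrank_map_le tail W).trans_lt hW))
  · have hle : extendedGabidulinSystem K L n ⊓ LinearMap.ker (tail.restrictScalars K) ⊓
        W.restrictScalars K ≤ K ∙ Pi.single 0 1 ⊓ (W ⊓ LinearMap.ker tail).restrictScalars K :=
      le_inf (inf_le_left.trans (extendedGabidulinSystem_inf_ker_funLeft_succ_le (by omega)))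
        fun _ hv => ⟨hv.2, hv.1.2⟩
    exact (Submodule.finrank_mono hle).trans
      (finrank_span_singleton_inf_restrictScalars_le _ _)

end Gabidulin

/-- the set `{(α+λ, α^q, …, α^{q^{k-1}}) : α ∈ Fqm, λ ∈ Fq}` is an
`[m+1,k]` system which is `(k-2)`-scattered and `(k-1,k)`-evasive. -/
theorem stmt17 [Fintype Fq] (q m k : ℕ) (hq : Fintype.card Fq = q)
    (hm : finrank Fq Fqm = m) (hk : 2 ≤ k) (hkm : k ≤ m) :
    ∃ U : Submodule Fq (Fin k → Fqm),
      (U : Set (Fin k → Fqm)) =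
        {v | ∃ (α : Fqm) (l : Fq),
          v = fun i : Fin k => if (i : ℕ) = 0 then α + algebraMap Fq Fqm l else α ^ q ^ (i : ℕ)} ∧
      finrank Fq ↥U = m + 1 ∧
      span Fqm (U : Set (Fin k → Fqm)) = ⊤ ∧
      IsEvasive Fq Fqm U (k - 2) (k - 2) ∧ IsEvasive Fq Fqm U (k - 1) k := by
  subst hq hm
  obtain ⟨n, rfl⟩ := Nat.exists_eq_add_of_le' hk
  have : FiniteDimensional Fq Fqm := Module.finite_of_finrank_pos (by omega)
  refine ⟨extendedGabidulinSystem Fq Fqm (n + 1), coe_extendedGabidulinSystem,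
    finrank_extendedGabidulinSystem n.succ_pos, span_extendedGabidulinSystem_eq_top hkm,
    fun W hW => ?_, fun W hW => ?_⟩
  · exact (finrank_extendedGabidulinSystem_inf_le (hW.trans_lt n.lt_succ_self)).trans_eq hW
  · exact (finrank_extendedGabidulinSystem_inf_le_add_one
      (hW.trans_lt (n + 1).lt_succ_self)).trans_eq (congrArg (· + 1) hW)
end
end

section
/- Let 1 ≤ k < n, let C be a nondegenerate [n,k]_{q^m/q} code, let U be a system associated to C, and let h be an integer with 0 ≤ h < k. Then U is h-scattered if and only if Rdef(C^⊥) ≤ ⌊km/n⌋ − h − 1, where Rdef(C^⊥) = m − ⌈(n−k)m/n⌉ − d(C^⊥) + 1 is the Singleton rank defect of the dual code. -/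
open Module Submodule

noncomputable section

variable (Fq Fqm : Type) [Field Fq] [Field Fqm] [Algebra Fq Fqm]

/-!
The defect inequality says `h + 2 ≤ d(C^⊥)`, because
`m - ⌈(n - k)m/n⌉ = ⌊km/n⌋`. Call an `Fq`-subspace `T` of an `Fqm`-space scalar independent if
`Fqm ⊗ T` embeds, that is, if `T` and its `Fqm`-span have the same dimension; this passes to
subspaces. A generator matrix `G` maps `Fq^n ⊆ Fqm^n` isomorphically onto `U`, and:

* `U` is `h`-scattered iff all its subspaces of dimension at most `h + 1` are scalar independent;
* a vector has rank weight at most `w` iff it lies in the `Fqm`-span of a `w`-dimensional subspace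
  of `Fq^n`;
* the image under `G` of a subspace `T` of `Fq^n` is scalar independent iff the `Fqm`-span of `T`
  meets `ker G = C^⊥` trivially.
-/

section ScalarIndependence

variable {K F V W : Type*} [Field K] [AddCommGroup V] [Module K V] [AddCommGroup W] [Module K W]

theorem exists_submodule_between_finrank_eq {A B : Submodule K V} [FiniteDimensional K B]
    (hAB : A ≤ B) {r : ℕ} (hAr : finrank K A ≤ r) (hrB : r ≤ finrank K B) :
    ∃ T : Submodule K V, A ≤ T ∧ T ≤ B ∧ finrank K T = r := by
  induction r, hAr using Nat.le_induction with
  | base => exact ⟨A, le_rfl, hAB, rfl⟩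
  | succ r _ ih =>
    obtain ⟨T, hAT, hTB, hT⟩ := ih (by omega)
    have : FiniteDimensional K T := finiteDimensional_of_le hTB
    have hTltB : T < B := lt_of_le_of_finrank_lt_finrank hTB (by omega)
    obtain ⟨b, hbB, hbT⟩ := SetLike.exists_of_lt hTltB
    refine ⟨K ∙ b ⊔ T, hAT.trans le_sup_right, sup_le (by simpa using hbB) hTB, ?_⟩
    have hge := finrank_lt_finrank_of_lt (covBy_span_singleton_sup hbT).lt
    have hle := finrank_add_le_finrank_add_finrank (K ∙ b) T
    have hone : finrank K (K ∙ b) ≤ 1 := (finrank_span_le_card {b}).trans (by simp)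
    omega

theorem exists_fun_fin_finrank_span_range_eq (T : Submodule K V) [FiniteDimensional K T] :
    ∃ u : Fin (finrank K T) → V, span K (Set.range u) = T :=
  ⟨T.subtype ∘ finBasis K T, by
    rw [Set.range_comp, span_image, Basis.span_eq, map_subtype_top]⟩

theorem exists_le_map_eq_of_le_map {A : Submodule K V} {f : V →ₗ[K] W} {T : Submodule K W}
    (hT : T ≤ A.map f) : ∃ S ≤ A, S.map f = T := by
  refine ⟨A ⊓ T.comap f, inf_le_left, le_antisymm (map_le_iff_le_comap.2 inf_le_right) ?_⟩
  intro y hy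
  obtain ⟨x, hx, rfl⟩ := hT hy
  exact mem_map_of_mem ⟨hx, hy⟩

theorem finrank_map_of_disjoint_ker {T : Submodule K V} {f : V →ₗ[K] W}
    (hf : Disjoint T (LinearMap.ker f)) : finrank K (T.map f) = finrank K T := by
  rw [← LinearMap.range_domRestrict]
  exact LinearMap.finrank_range_of_inj (LinearMap.injective_domRestrict_iff.2 hf)

variable [Field F] [Algebra K F] [Module F V] [IsScalarTower K F V] [Module F W]
  [IsScalarTower K F W]

theorem finiteDimensional_span (T : Submodule K V) [FiniteDimensional K T] :
    FiniteDimensional F (span F (T : Set V)) := by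
  obtain ⟨u, hu⟩ := exists_fun_fin_finrank_span_range_eq T
  rw [← hu, span_span_of_tower]
  exact FiniteDimensional.span_of_finite F (Set.finite_range u)

theorem finrank_span_le (T : Submodule K V) [FiniteDimensional K T] :
    finrank F (span F (T : Set V)) ≤ finrank K T := by
  obtain ⟨u, hu⟩ := exists_fun_fin_finrank_span_range_eq T
  calc finrank F (span F (T : Set V)) = finrank F (span F (Set.range u)) := by
        rw [← span_span_of_tower K F (Set.range u), hu]
    _ ≤ Fintype.card (Fin (finrank K T)) := finrank_range_le_card u
    _ = finrank K T := Fintype.card_fin _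

theorem finrank_span_sup_le (S T : Submodule K V) [FiniteDimensional K S] [FiniteDimensional K T] :
    finrank F (span F ((S ⊔ T : Submodule K V) : Set V)) ≤
      finrank F (span F (S : Set V)) + finrank K T := by
  have := finiteDimensional_span (F := F) S
  have := finiteDimensional_span (F := F) T
  have hspan : span F ((S ⊔ T : Submodule K V) : Set V) =
      span F (S : Set V) ⊔ span F (T : Set V) := by
    rw [← span_union, ← span_span_of_tower K F ((S : Set V) ∪ T), span_union, span_eq, span_eq]
  rw [hspan]
  exact (finrank_add_le_finrank_add_finrank _ _).trans (by gcongr; exact finrank_span_le T)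

variable (F) in
/-- A `K`-subspace `T` of an `F`-vector space is scalar independent if `F ⊗[K] T` embeds into the
ambient space, so that `K`-independent vectors of `T` remain `F`-independent. For
finite-dimensional `T`, the only case of interest here, this is an equality of dimensions. -/
def IsScalarIndependent (T : Submodule K V) : Prop :=
  finrank F (span F (T : Set V)) = finrank K T

theorem isScalarIndependent_iff_finrank_le {T : Submodule K V} [FiniteDimensional K T] :
    IsScalarIndependent F T ↔ finrank K T ≤ finrank F (span F (T : Set V)) :=
  ⟨fun hT => hT.ge, (finrank_span_le T).antisymm⟩

namespace IsScalarIndependent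

theorem mono {S T : Submodule K V} [FiniteDimensional K T] (hT : IsScalarIndependent F T)
    (hST : S ≤ T) : IsScalarIndependent F S := by
  obtain ⟨Q, hQ⟩ := S.exists_isCompl
  have hsup : S ⊔ Q ⊓ T = T := by rw [← sup_inf_assoc_of_le Q hST, hQ.sup_eq_top, top_inf_eq]
  have hinf : S ⊓ (Q ⊓ T) = ⊥ := by rw [← inf_assoc, hQ.inf_eq_bot, bot_inf_eq]
  have : FiniteDimensional K S := finiteDimensional_of_le hST
  have : FiniteDimensional K ↥(Q ⊓ T) := finiteDimensional_of_le inf_le_right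
  have hdim : finrank K T = finrank K S + finrank K ↥(Q ⊓ T) := by
    rw [← finrank_sup_add_finrank_inf_eq, hsup, hinf, finrank_bot, add_zero]
  have hle : finrank K T ≤ finrank F (span F (S : Set V)) + finrank K ↥(Q ⊓ T) :=
    calc finrank K T = finrank F (span F ((S ⊔ Q ⊓ T : Submodule K V) : Set V)) := by
          rw [hsup, hT]
      _ ≤ _ := finrank_span_sup_le S (Q ⊓ T)
  exact isScalarIndependent_iff_finrank_le.2 (by omega)

theorem map_iff_disjoint_ker {T : Submodule K V} [FiniteDimensional K T]
    (hT : IsScalarIndependent F T) {φ : V →ₗ[F] W}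
    (hφ : Disjoint T (LinearMap.ker (φ.restrictScalars K))) :
    IsScalarIndependent F (T.map (φ.restrictScalars K)) ↔
      Disjoint (span F (T : Set V)) (LinearMap.ker φ) := by
  have := finiteDimensional_span (F := F) T
  have hspan : span F (T.map (φ.restrictScalars K) : Set W) = (span F (T : Set V)).map φ :=
    span_image φ
  rw [IsScalarIndependent, hspan, finrank_map_of_disjoint_ker hφ]
  exact ⟨fun h => disjoint_ker_of_finrank_le φ (by rw [h, hT]),
    fun h => (finrank_map_of_disjoint_ker h).trans hT⟩

end IsScalarIndependent

theorem isScalarIndependent_span_range {ι : Type*} [Finite ι] {b : ι → V}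
    (hb : LinearIndependent F b) : IsScalarIndependent F (span K (Set.range b)) := by
  cases nonempty_fintype ι
  rw [IsScalarIndependent, span_span_of_tower, finrank_span_eq_card hb,
    finrank_span_eq_card (hb.restrict_scalars' K)]

end ScalarIndependence

variable {Fq Fqm}

section RankWeight

variable {n : ℕ}

variable (Fq Fqm n) in
/-- The copy of `Fq^n` inside `Fqm^n`, as the `Fq`-span of the standard basis. -/
def rationalVectors : Submodule Fq (Fin n → Fqm) :=
  span Fq (Set.range (Pi.basisFun Fqm (Fin n)))

instance : FiniteDimensional Fq (rationalVectors Fq Fqm n) :=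
  FiniteDimensional.span_of_finite Fq (Set.finite_range _)

theorem mem_rationalVectors_iff {x : Fin n → Fqm} :
    x ∈ rationalVectors Fq Fqm n ↔ ∃ y : Fin n → Fq, ∀ j, algebraMap Fq Fqm (y j) = x j := by
  simp [rationalVectors, mem_span_range_iff_exists_fun, funext_iff, Pi.single_apply,
    Algebra.smul_def]

theorem isScalarIndependent_rationalVectors :
    IsScalarIndependent Fqm (rationalVectors Fq Fqm n) :=
  isScalarIndependent_span_range (Pi.basisFun Fqm (Fin n)).linearIndependent

theorem finrank_rationalVectors : finrank Fq (rationalVectors Fq Fqm n) = n :=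
  (finrank_span_eq_card ((Pi.basisFun Fqm (Fin n)).linearIndependent.restrict_scalars' Fq)).trans
    (Fintype.card_fin n)

theorem exists_le_rationalVectors_mem_span (v : Fin n → Fqm) :
    ∃ T ≤ rationalVectors Fq Fqm n, finrank Fq T ≤ rankWeight Fq Fqm v ∧
      v ∈ span Fqm (T : Set (Fin n → Fqm)) := by
  have : FiniteDimensional Fq (span Fq (Set.range v)) :=
    FiniteDimensional.span_of_finite Fq (Set.finite_range v)
  obtain ⟨a, ha⟩ := exists_fun_fin_finrank_span_range_eq (span Fq (Set.range v))
  have hcoord (j) : ∃ c : Fin _ → Fq, ∑ t, c t • a t = v j := by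
    rw [← mem_span_range_iff_exists_fun, ha]
    exact subset_span ⟨j, rfl⟩
  choose c hc using hcoord
  let row (t : Fin _) (j : Fin n) : Fqm := algebraMap Fq Fqm (c j t)
  have hv : ∑ t, a t • row t = v := by
    ext j
    simp [← hc, row, Algebra.smul_def, mul_comm]
  refine ⟨span Fq (Set.range row), span_le.2 ?_, ?_, ?_⟩
  · rintro _ ⟨t, rfl⟩
    exact mem_rationalVectors_iff.2 ⟨fun j => c j t, fun _ => rfl⟩
  · exact (finrank_range_le_card row).trans_eq (Fintype.card_fin _)
  · rw [span_span_of_tower]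
    exact (mem_span_range_iff_exists_fun Fqm).2 ⟨a, hv⟩

theorem rankWeight_le_finrank {T : Submodule Fq (Fin n → Fqm)} (hT : T ≤ rationalVectors Fq Fqm n)
    {v : Fin n → Fqm} (hv : v ∈ span Fqm (T : Set (Fin n → Fqm))) :
    rankWeight Fq Fqm v ≤ finrank Fq T := by
  have : FiniteDimensional Fq T := finiteDimensional_of_le hT
  obtain ⟨u, hu⟩ := exists_fun_fin_finrank_span_range_eq T
  have hurat (t) : u t ∈ rationalVectors Fq Fqm n := hT (hu ▸ subset_span ⟨t, rfl⟩)
  choose y hy using fun t => mem_rationalVectors_iff.1 (hurat t)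
  rw [← hu, span_span_of_tower, mem_span_range_iff_exists_fun] at hv
  obtain ⟨a, rfl⟩ := hv
  have hentries : span Fq (Set.range (∑ t, a t • u t)) ≤ span Fq (Set.range a) := by
    rw [span_le]
    rintro _ ⟨j, rfl⟩
    have hj : (∑ t, a t • u t) j = ∑ t, y t j • a t := by
      simp [← hy, Algebra.smul_def, mul_comm]
    rw [hj]
    exact sum_mem fun t _ => smul_mem _ _ (subset_span ⟨t, rfl⟩)
  have : FiniteDimensional Fq (span Fq (Set.range a)) :=
    FiniteDimensional.span_of_finite Fq (Set.finite_range a)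
  calc rankWeight Fq Fqm (∑ t, a t • u t) ≤ finrank Fq (span Fq (Set.range a)) :=
        finrank_mono hentries
    _ ≤ Fintype.card (Fin (finrank Fq T)) := finrank_range_le_card a
    _ = finrank Fq T := Fintype.card_fin _

theorem rankWeight_le_iff {v : Fin n → Fqm} {w : ℕ} :
    rankWeight Fq Fqm v ≤ w ↔ ∃ T ≤ rationalVectors Fq Fqm n, finrank Fq T ≤ w ∧
      v ∈ span Fqm (T : Set (Fin n → Fqm)) := by
  constructor
  · intro hw
    obtain ⟨T, hT, hTv, hv⟩ := exists_le_rationalVectors_mem_span (Fq := Fq) v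
    exact ⟨T, hT, hTv.trans hw, hv⟩
  · rintro ⟨T, hT, hTw, hv⟩
    exact (rankWeight_le_finrank hT hv).trans hTw

theorem le_minRankDist_iff_s18 {C : Submodule Fqm (Fin n → Fqm)} (hC : C ≠ ⊥) {d : ℕ} :
    d ≤ minRankDist Fq Fqm C ↔ ∀ v ∈ C, v ≠ 0 → d ≤ rankWeight Fq Fqm v := by
  obtain ⟨v, hv, hv0⟩ := exists_mem_ne_zero_of_ne_bot hC
  have hne : {w | ∃ v ∈ C, v ≠ 0 ∧ rankWeight Fq Fqm v = w}.Nonempty := ⟨_, v, hv, hv0, rfl⟩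
  rw [minRankDist, le_csInf_iff'' hne]
  aesop

end RankWeight

section Scattered

variable {n k h : ℕ}

theorem isEvasive_self_iff_forall_isScalarIndependent {U : Submodule Fq (Fin k → Fqm)}
    [FiniteDimensional Fq U] (hhk : h ≤ k) (hhU : h < finrank Fq U) :
    IsEvasive Fq Fqm U h h ↔
      ∀ T ≤ U, finrank Fq T ≤ h + 1 → IsScalarIndependent Fqm T := by
  constructor
  · intro hU T hTU hT
    obtain ⟨S, hTS, hSU, hS⟩ := exists_submodule_between_finrank_eq hTU hT hhU
    have : FiniteDimensional Fq S := finiteDimensional_of_le hSU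
    refine IsScalarIndependent.mono (isScalarIndependent_iff_finrank_le.2 ?_) hTS
    by_contra! hlt
    obtain ⟨W, hSW, -, hW⟩ := exists_submodule_between_finrank_eq
      (A := span Fqm (S : Set (Fin k → Fqm))) (r := h) le_top (by omega) (by simpa using hhk)
    have : FiniteDimensional Fq ↥(U ⊓ W.restrictScalars Fq) := finiteDimensional_of_le inf_le_left
    have hSUW : S ≤ U ⊓ W.restrictScalars Fq := le_inf hSU fun x hx => hSW (subset_span hx)
    have := (finrank_mono hSUW).trans (hU W hW)
    omega
  · intro hU W hW
    by_contra! hlt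
    have : FiniteDimensional Fq ↥(U ⊓ W.restrictScalars Fq) := finiteDimensional_of_le inf_le_left
    obtain ⟨T, -, hTUW, hT⟩ := exists_submodule_between_finrank_eq
      (bot_le : ⊥ ≤ U ⊓ W.restrictScalars Fq) (by simp) hlt
    have hTspan : finrank Fqm (span Fqm (T : Set (Fin k → Fqm))) = finrank Fq T :=
      hU T (hTUW.trans inf_le_left) hT.le
    have hTW : span Fqm (T : Set (Fin k → Fqm)) ≤ W := span_le.2 (hTUW.trans inf_le_right)
    have := finrank_mono hTW
    omega

theorem isEvasive_self_map_rationalVectors_iff {φ : (Fin n → Fqm) →ₗ[Fqm] (Fin k → Fqm)}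
    (hφ : Disjoint (rationalVectors Fq Fqm n) (LinearMap.ker (φ.restrictScalars Fq)))
    (hhk : h ≤ k) (hhn : h < n) :
    IsEvasive Fq Fqm ((rationalVectors Fq Fqm n).map (φ.restrictScalars Fq)) h h ↔
      ∀ v ∈ LinearMap.ker φ, v ≠ 0 → h + 2 ≤ rankWeight Fq Fqm v := by
  have hfin := finrank_map_of_disjoint_ker hφ
  rw [finrank_rationalVectors] at hfin
  have himage {S : Submodule Fq (Fin n → Fqm)} (hS : S ≤ rationalVectors Fq Fqm n) :
      finrank Fq (S.map (φ.restrictScalars Fq)) = finrank Fq S ∧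
      (IsScalarIndependent Fqm (S.map (φ.restrictScalars Fq)) ↔
        Disjoint (span Fqm (S : Set (Fin n → Fqm))) (LinearMap.ker φ)) := by
    have : FiniteDimensional Fq S := finiteDimensional_of_le hS
    exact ⟨finrank_map_of_disjoint_ker (hφ.mono_left hS),
      (isScalarIndependent_rationalVectors.mono hS).map_iff_disjoint_ker (hφ.mono_left hS)⟩
  rw [isEvasive_self_iff_forall_isScalarIndependent hhk (by rwa [hfin])]
  constructor
  · intro hU v hv hv0
    by_contra! hlt
    obtain ⟨S, hS, hSh, hvS⟩ := rankWeight_le_iff.1 (Nat.le_of_lt_succ hlt)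
    have hdisj := (himage hS).2.1 (hU _ (map_mono hS) ((himage hS).1.trans_le hSh))
    exact hv0 (disjoint_def.1 hdisj v hvS hv)
  · intro hker T hTU hT
    obtain ⟨S, hS, rfl⟩ := exists_le_map_eq_of_le_map hTU
    refine (himage hS).2.2 (disjoint_def.2 fun v hvS hv => ?_)
    by_contra hv0
    have := hker v hv hv0
    have := rankWeight_le_iff.2 ⟨S, hS, (himage hS).1.symm.trans_le hT, hvS⟩
    omega

end Scattered

section AssociatedSystem

variable {n k h : ℕ} {C : Submodule Fqm (Fin n → Fqm)} {G : Fin k → Fin n → Fqm}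

theorem dualCode_eq_ker_mulVecLin (hG : IsGenMatrix Fqm C G) :
    dualCode Fqm C = LinearMap.ker (Matrix.of G).mulVecLin := by
  ext v
  rw [LinearMap.mem_ker, funext_iff]
  constructor
  · intro hv i
    exact hv (G i) (hG ▸ subset_span ⟨i, rfl⟩)
  · intro hv
    let pairing : (Fin n → Fqm) →ₗ[Fqm] Fqm := Fintype.linearCombination Fqm v
    have hC : C ≤ LinearMap.ker pairing := by
      rw [hG, span_le]
      rintro _ ⟨i, rfl⟩
      exact hv i
    exact hC

variable (Fq G) in
theorem map_mulVecLin_rationalVectors :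
    (rationalVectors Fq Fqm n).map ((Matrix.of G).mulVecLin.restrictScalars Fq) =
      span Fq (Set.range fun j i => G i j) := by
  rw [rationalVectors, map_span, ← Set.range_comp]
  congr 2
  ext j i
  simp

theorem IsNondegenerate.disjoint_dualCode (hC : IsNondegenerate Fq Fqm k C) :
    Disjoint (rationalVectors Fq Fqm n) ((dualCode Fqm C).restrictScalars Fq) := by
  obtain ⟨G, hG, hrank⟩ := hC
  rw [dualCode_eq_ker_mulVecLin hG]
  refine disjoint_ker_of_finrank_le ((Matrix.of G).mulVecLin.restrictScalars Fq) ?_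
  rw [map_mulVecLin_rationalVectors, hrank, finrank_rationalVectors]

theorem dualCode_ne_bot (hG : IsGenMatrix Fqm C G) (hkn : k < n) : dualCode Fqm C ≠ ⊥ := by
  rw [dualCode_eq_ker_mulVecLin hG]
  exact LinearMap.ker_ne_bot_of_finrank_lt (by simpa using hkn)

theorem isEvasive_self_iff_le_minRankDist_dualCode (hkn : k < n) (hhk : h ≤ k)
    (hC : IsNondegenerate Fq Fqm k C) {U : Submodule Fq (Fin k → Fqm)}
    (hU : IsAssociatedSystem Fq Fqm C U) :
    IsEvasive Fq Fqm U h h ↔ h + 2 ≤ minRankDist Fq Fqm (dualCode Fqm C) := by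
  obtain ⟨G, hG, rfl⟩ := hU
  have hdisj := hC.disjoint_dualCode
  rw [le_minRankDist_iff_s18 (dualCode_ne_bot hG hkn)]
  rw [dualCode_eq_ker_mulVecLin hG] at hdisj ⊢
  rw [← map_mulVecLin_rationalVectors]
  exact isEvasive_self_map_rationalVectors_iff hdisj hhk (by omega)

end AssociatedSystem

theorem sub_ceil_sub_mul_div_eq_floor {n : ℕ} (hn : n ≠ 0) (k m : ℕ) :
    (m : ℤ) - ⌈(((n : ℚ) - k) * m) / n⌉ = ⌊((k : ℚ) * m) / n⌋ := by
  have hn' : (n : ℚ) ≠ 0 := by exact_mod_cast hn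
  have hsplit : (((n : ℚ) - k) * m) / n = -((k : ℚ) * m / n) + (m : ℤ) := by
    push_cast
    field_simp
    ring
  rw [hsplit, Int.ceil_add_intCast, Int.ceil_neg]
  ring

variable (Fq Fqm)

theorem stmt18_general {n k h : ℕ} (hkn : k < n) (hhk : h ≤ k)
    (C : Submodule Fqm (Fin n → Fqm)) (hnd : IsNondegenerate Fq Fqm k C)
    (U : Submodule Fq (Fin k → Fqm)) (hU : IsAssociatedSystem Fq Fqm C U) :
    IsEvasive Fq Fqm U h h ↔
      (finrank Fq Fqm : ℤ) - ⌈(((n : ℚ) - finrank Fqm C) * finrank Fq Fqm) / n⌉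
          - (minRankDist Fq Fqm (dualCode Fqm C) : ℤ) + 1
        ≤ ⌊((finrank Fqm C : ℚ) * finrank Fq Fqm) / n⌋ - h - 1 := by
  rw [isEvasive_self_iff_le_minRankDist_dualCode hkn hhk hnd hU,
    sub_ceil_sub_mul_div_eq_floor (by omega)]
  omega

/-- `U` is `h`-scattered iff `Rdef(C^⊥) ≤ ⌊km/n⌋ - h - 1`. -/
theorem stmt18 [Fintype Fq] (n k m h : ℕ) (hm : finrank Fq Fqm = m)
    (hk1 : 1 ≤ k) (hkn : k < n) (hhk : h < k)
    (C : Submodule Fqm (Fin n → Fqm)) (hdim : finrank Fqm ↥C = k)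
    (hnd : IsNondegenerate Fq Fqm k C)
    (U : Submodule Fq (Fin k → Fqm)) (hU : IsAssociatedSystem Fq Fqm C U) :
    IsEvasive Fq Fqm U h h ↔
      (m : ℤ) - ⌈(((n : ℚ) - k) * m) / n⌉ - (minRankDist Fq Fqm (dualCode Fqm C) : ℤ) + 1
        ≤ ⌊((k : ℚ) * m) / n⌋ - h - 1 := by
  subst hm hdim
  exact stmt18_general Fq Fqm hkn hhk.le C hnd U hU
end
end
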